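/- With all heat operators taken with index m = 1, the weak Jacobi form φ_{−2,1} = ϑ(τ,z)²/η(τ)⁶ satisfies H^{(1)}_{−2}(φ_{−2,1})(τ,z) = −(1/2)·φ_{0,1}(τ,z) for all (τ,z) ∈ ℍ × ℂ. -/

import Mathlib

/-!
The identity is the product rule applied to `ϑ²/η⁶`, fed with two differential equations.

* `thetaJ_heat`: every summand `(-1)^n e^{πiτ(n+1/2)² + 2πiz(n+1/2)}` of `ϑ` solves the heat
  equation `∂²/∂z² = 4πi ∂/∂τ`. The series converges uniformly on each set `im τ > T > 0`,
  `|im z| < S` (`norm_thetaTerm_le`), so by the Weierstrass theorem it may be differentiated term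
  by term, and `ϑ` solves the same equation.
* `hasDerivAt_etaD`: `η'/η = (πi/12) E₂`, which Mathlib proves for its own `η` and `E₂`.

Writing `ϑ_z`, `ϑ_zz` for the derivatives, `H^{(1)}(ϑ²/η⁶)` becomes
`-(3/π²) ϑϑ_zz/η⁶ - 3 E₂ϑ²/η⁶ + (3/(2π²)) (ϑ_z² + ϑϑ_zz)/η⁶`, and adding `(5/2) E₂ϑ²/η⁶` gives
`-φ_{0,1}/2`.
-/

open Complex Real

noncomputable section

/-- The Jacobi theta series `ϑ(τ,z) = q^{1/8} ζ^{1/2} ∑_{n∈ℤ} (−1)^n q^{n(n+1)/2} ζ^n`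
with `q = e^{2πiτ}`, `ζ = e^{2πiz}`. -/
def thetaJ (τ z : ℂ) : ℂ :=
  Complex.exp (π * I * τ / 4) * Complex.exp (π * I * z) *
    ∑' n : ℤ, (-1 : ℂ) ^ n * Complex.exp (π * I * τ * n * (n + 1)) *
      Complex.exp (2 * π * I * z * n)

/-- The Dedekind eta function `η(τ) = q^{1/24} ∏_{n≥1} (1 − q^n)`. -/
def etaD (τ : ℂ) : ℂ :=
  Complex.exp (π * I * τ / 12) * ∏' n : ℕ, (1 - Complex.exp (2 * π * I * τ * (n + 1)))

/-- The divisor power sum `σ_k(n) = ∑_{d ∣ n} d^k`. -/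
def sigmaD (k n : ℕ) : ℕ := ∑ d ∈ n.divisors, d ^ k

/-- The quasi-modular Eisenstein series `E₂`. -/
def Eis2 (τ : ℂ) : ℂ :=
  1 - 24 * ∑' n : ℕ, (sigmaD 1 (n + 1) : ℂ) * Complex.exp (2 * π * I * τ * (n + 1))

/-- The Eisenstein series `E₄`. -/
def Eis4 (τ : ℂ) : ℂ :=
  1 + 240 * ∑' n : ℕ, (sigmaD 3 (n + 1) : ℂ) * Complex.exp (2 * π * I * τ * (n + 1))

/-- The Eisenstein series `E₆`. -/
def Eis6 (τ : ℂ) : ℂ :=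
  1 - 504 * ∑' n : ℕ, (sigmaD 5 (n + 1) : ℂ) * Complex.exp (2 * π * I * τ * (n + 1))

/-- The heat operator `H^{(m)}φ = (12/(2πi)) ∂φ/∂τ + (3/(4π²m)) ∂²φ/∂z²` of index `m`. -/
def heatOp (m : ℚ) (φ : ℂ → ℂ → ℂ) (τ z : ℂ) : ℂ :=
  12 / (2 * π * I) * deriv (fun t => φ t z) τ
    + 3 / (4 * π ^ 2 * (m : ℂ)) * deriv (deriv (φ τ)) z

/-- The modular heat operator `H^{(m)}_k φ = H^{(m)}φ − ((2k−1)/2)·E₂·φ`. -/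
def heatMod (m k : ℚ) (φ : ℂ → ℂ → ℂ) (τ z : ℂ) : ℂ :=
  heatOp m φ τ z - (2 * (k : ℂ) - 1) / 2 * Eis2 τ * φ τ z

/-- The weak Jacobi form `φ_{−2,1} = ϑ²/η⁶` of weight −2 and index 1. -/
def phim21 (τ z : ℂ) : ℂ := thetaJ τ z ^ 2 / etaD τ ^ 6

/-- The weak Jacobi form `φ_{0,1}` of weight 0 and index 1:
`φ_{0,1} = (3/π²)·(ϑ·∂²ϑ/∂z² − (∂ϑ/∂z)²)/η⁶ + E₂·ϑ²/η⁶`. -/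
def phi01 (τ z : ℂ) : ℂ :=
  3 / (π : ℂ) ^ 2 *
      (thetaJ τ z * deriv (deriv (thetaJ τ)) z - (deriv (thetaJ τ) z) ^ 2) / etaD τ ^ 6
    + Eis2 τ * thetaJ τ z ^ 2 / etaD τ ^ 6

/-- The `n`-th summand `(-1)^n e^{πiτ(n+1/2)² + 2πiz(n+1/2)}` of `ϑ(τ,z)`, prefactors included. -/
def thetaTerm (n : ℤ) (τ z : ℂ) : ℂ :=
  (-1 : ℂ) ^ n * Complex.exp (π * I * τ * (n + 1 / 2) ^ 2 + 2 * π * I * z * (n + 1 / 2))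

lemma thetaJ_eq_tsum (τ z : ℂ) : thetaJ τ z = ∑' n : ℤ, thetaTerm n τ z := by
  rw [thetaJ, ← tsum_mul_left]
  refine tsum_congr fun n => ?_
  rw [thetaTerm, show (π * I * τ * (n + 1 / 2) ^ 2 + 2 * π * I * z * (n + 1 / 2) : ℂ)
    = π * I * τ / 4 + π * I * z + π * I * τ * n * (n + 1) + 2 * π * I * z * n by ring,
    Complex.exp_add, Complex.exp_add, Complex.exp_add]
  ring

lemma norm_thetaTerm (n : ℤ) (τ z : ℂ) :
    ‖thetaTerm n τ z‖ = Real.exp (-π * (τ.im * (n + 1 / 2) ^ 2 + 2 * z.im * (n + 1 / 2))) := by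
  rw [thetaTerm, norm_mul, norm_zpow, norm_neg, norm_one, one_zpow, one_mul, Complex.norm_exp,
    show (π * I * τ * (n + 1 / 2) ^ 2 + 2 * π * I * z * (n + 1 / 2) : ℂ)
      = ((π * (n + 1 / 2) ^ 2 : ℝ) : ℂ) * τ * I + ((2 * π * (n + 1 / 2) : ℝ) : ℂ) * z * I by
      push_cast; ring,
    add_re, mul_I_re, im_ofReal_mul, mul_I_re, im_ofReal_mul]
  ring_nf

/-- A majorant of the summands on `im τ ≥ T`, `|im z| ≤ S`. The shift by `1/2` in the exponent is
absorbed by replacing `S` by `S + T / 2` in Mathlib's majorant for `jacobiTheta₂_term`. -/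
lemma norm_thetaTerm_le {S T : ℝ} (hT : 0 < T) {τ z : ℂ} (hz : |z.im| ≤ S) (hτ : T ≤ τ.im)
    (n : ℤ) : ‖thetaTerm n τ z‖ ≤
      Real.exp (π * S) * Real.exp (-π * (T * n ^ 2 - 2 * (S + T / 2) * |n|)) := by
  rw [norm_thetaTerm, ← Real.exp_add, Real.exp_le_exp]
  have h1 : T * ((n : ℝ) + 1 / 2) ^ 2 ≤ τ.im * (n + 1 / 2) ^ 2 := by gcongr
  have h2 : -(S * |(n : ℝ)|) ≤ z.im * n := by
    have : |z.im * n| ≤ S * |(n : ℝ)| := by rw [abs_mul]; gcongr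
    linarith [neg_abs_le (z.im * n)]
  have h3 : -(T * |(n : ℝ)|) ≤ T * n := by nlinarith [neg_abs_le (n : ℝ)]
  have h4 : -S ≤ z.im := by linarith [neg_abs_le z.im]
  push_cast
  nlinarith [Real.pi_pos, mul_nonneg Real.pi_pos.le (sub_nonneg.2 h1),
    mul_nonneg Real.pi_pos.le (sub_nonneg.2 h2), mul_nonneg Real.pi_pos.le (sub_nonneg.2 h3),
    mul_nonneg Real.pi_pos.le (sub_nonneg.2 h4), mul_nonneg Real.pi_pos.le hT.le]

lemma summable_thetaBound (S : ℝ) {T : ℝ} (hT : 0 < T) : Summable fun n : ℤ =>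
    Real.exp (π * S) * Real.exp (-π * (T * n ^ 2 - 2 * (S + T / 2) * |n|)) := by
  simpa using (summable_pow_mul_jacobiTheta₂_term_bound (S + T / 2) hT 0).mul_left
    (Real.exp (π * S))

lemma hasDerivAt_thetaTerm_tau (n : ℤ) (τ z : ℂ) : HasDerivAt (fun t => thetaTerm n t z)
    (π * I * (n + 1 / 2) ^ 2 * thetaTerm n τ z) τ := by
  have h : HasDerivAt (fun t : ℂ => (π * I * t * (n + 1 / 2) ^ 2 + 2 * π * I * z * (n + 1 / 2) : ℂ))
      (π * I * (n + 1 / 2) ^ 2) τ := by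
    simpa using ((((hasDerivAt_id τ).const_mul (π * I : ℂ)).mul_const
      ((n + 1 / 2 : ℂ) ^ 2)).add_const (2 * π * I * z * (n + 1 / 2) : ℂ))
  refine (h.cexp.const_mul ((-1 : ℂ) ^ n)).congr_deriv ?_
  rw [thetaTerm]; ring

lemma hasDerivAt_thetaTerm_z (n : ℤ) (τ z : ℂ) : HasDerivAt (thetaTerm n τ)
    (2 * π * I * (n + 1 / 2) * thetaTerm n τ z) z := by
  have h : HasDerivAt (fun w : ℂ => (π * I * τ * (n + 1 / 2) ^ 2 + 2 * π * I * w * (n + 1 / 2) : ℂ))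
      (2 * π * I * (n + 1 / 2)) z := by
    simpa using ((((hasDerivAt_id z).const_mul (2 * π * I : ℂ)).mul_const
      (n + 1 / 2 : ℂ)).const_add (π * I * τ * (n + 1 / 2) ^ 2 : ℂ))
  refine (h.cexp.const_mul ((-1 : ℂ) ^ n)).congr_deriv ?_
  rw [thetaTerm]; ring

lemma deriv_deriv_thetaTerm (n : ℤ) (τ z : ℂ) : deriv (deriv (thetaTerm n τ)) z =
    (2 * π * I * (n + 1 / 2)) ^ 2 * thetaTerm n τ z := by
  have h : deriv (thetaTerm n τ) = fun w => 2 * π * I * (n + 1 / 2) * thetaTerm n τ w :=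
    funext fun w => (hasDerivAt_thetaTerm_z n τ w).deriv
  rw [h, ((hasDerivAt_thetaTerm_z n τ z).const_mul _).deriv]
  ring

lemma isOpen_strip (S : ℝ) : IsOpen {w : ℂ | |w.im| < S} :=
  isOpen_lt (by fun_prop) continuous_const

lemma isOpen_halfPlane (T : ℝ) : IsOpen {t : ℂ | T < t.im} :=
  isOpen_lt continuous_const (by fun_prop)

/-- Weierstrass: a series of holomorphic functions dominated on `U` by a summable sequence may be
differentiated twice term by term. -/
lemma hasSum_deriv_deriv {ι : Type*} {F : ι → ℂ → ℂ} {U : Set ℂ} {u : ι → ℝ} {z : ℂ}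
    (hu : Summable u) (hf : ∀ i, Differentiable ℂ (F i)) (hU : IsOpen U)
    (hle : ∀ i w, w ∈ U → ‖F i w‖ ≤ u i) (hz : z ∈ U) :
    HasSum (fun i => deriv (deriv (F i)) z) (deriv (deriv fun w => ∑' i, F i w) z) := by
  have h0 := (tendstoUniformlyOn_tsum hu hle).tendstoLocallyUniformlyOn
  have h1 := h0.deriv (.of_forall fun s => (Differentiable.fun_sum fun i _ => hf i).differentiableOn)
    hU
  have hd : ∀ i, Differentiable ℂ (deriv (F i)) := fun i => by
    simpa [differentiableOn_univ] using ((hf i).differentiableOn (s := Set.univ)).deriv isOpen_univ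
  have e1 : (deriv ∘ fun (s : Finset ι) w => ∑ i ∈ s, F i w)
      = fun (s : Finset ι) w => ∑ i ∈ s, deriv (F i) w := by
    funext s w
    exact deriv_fun_sum fun i _ => hf i w
  rw [e1] at h1
  have h2 := h1.deriv (.of_forall fun s => (Differentiable.fun_sum fun i _ => hd i).differentiableOn)
    hU
  have e2 : (deriv ∘ fun (s : Finset ι) w => ∑ i ∈ s, deriv (F i) w)
      = fun (s : Finset ι) w => ∑ i ∈ s, deriv (deriv (F i)) w := by
    funext s w
    exact deriv_fun_sum fun i _ => hd i w
  rw [e2] at h2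
  exact h2.tendsto_at hz

lemma differentiable_thetaJ {τ : ℂ} (hτ : 0 < τ.im) : Differentiable ℂ (thetaJ τ) := by
  intro z
  rw [show thetaJ τ = fun w => ∑' n, thetaTerm n τ w from funext (thetaJ_eq_tsum τ)]
  refine (differentiableOn_tsum_of_summable_norm (summable_thetaBound (|z.im| + 1) hτ)
    (fun n => fun w _ => (hasDerivAt_thetaTerm_z n τ w).differentiableAt.differentiableWithinAt)
    (isOpen_strip (|z.im| + 1))
    (fun n w hw => norm_thetaTerm_le hτ (le_of_lt hw) le_rfl n)).differentiableAt
    ((isOpen_strip _).mem_nhds ?_)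
  simp

lemma differentiableAt_thetaJ_tau {τ : ℂ} (z : ℂ) (hτ : 0 < τ.im) :
    DifferentiableAt ℂ (fun t => thetaJ t z) τ := by
  rw [show (fun t => thetaJ t z) = fun t => ∑' n, thetaTerm n t z from
    funext fun t => thetaJ_eq_tsum t z]
  refine (differentiableOn_tsum_of_summable_norm (summable_thetaBound |z.im| (half_pos hτ))
    (fun n => fun w _ => (hasDerivAt_thetaTerm_tau n w z).differentiableAt.differentiableWithinAt)
    (isOpen_halfPlane (τ.im / 2))
    (fun n w hw => norm_thetaTerm_le (half_pos hτ) le_rfl (le_of_lt hw) n)).differentiableAt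
    ((isOpen_halfPlane _).mem_nhds ?_)
  simpa using hτ

/-- The heat equation `4πi ∂ϑ/∂τ = ∂²ϑ/∂z²`. -/
lemma thetaJ_heat {τ : ℂ} (z : ℂ) (hτ : 0 < τ.im) :
    deriv (deriv (thetaJ τ)) z = 4 * π * I * deriv (fun t => thetaJ t z) τ := by
  have hz := hasSum_deriv_deriv (z := z) (summable_thetaBound (|z.im| + 1) hτ)
    (fun n w => (hasDerivAt_thetaTerm_z n τ w).differentiableAt) (isOpen_strip (|z.im| + 1))
    (fun n w hw => norm_thetaTerm_le hτ (le_of_lt hw) le_rfl n) (by simp)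
  have ht := hasSum_deriv_of_summable_norm (z := τ) (F := fun n t => thetaTerm n t z)
    (summable_thetaBound |z.im| (half_pos hτ))
    (fun n => fun w _ => (hasDerivAt_thetaTerm_tau n w z).differentiableAt.differentiableWithinAt)
    (isOpen_halfPlane (τ.im / 2))
    (fun n w hw => norm_thetaTerm_le (half_pos hτ) le_rfl (le_of_lt hw) n) (by simpa using hτ)
  simp only [← thetaJ_eq_tsum] at hz ht
  refine hz.unique ((ht.mul_left (4 * π * I : ℂ)).congr_fun fun n => ?_)
  rw [deriv_deriv_thetaTerm, (hasDerivAt_thetaTerm_tau n τ z).deriv]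
  ring

lemma etaD_eq_eta : etaD = ModularForm.eta := by
  funext t
  rw [etaD, ModularForm.eta, Function.Periodic.qParam]
  congr 1
  · congr 1
    push_cast; ring
  · refine tprod_congr fun n => ?_
    rw [ModularForm.eta_q_eq_cexp]
    ring_nf

lemma Eis2_eq_E2 {τ : ℂ} (hτ : 0 < τ.im) : Eis2 τ = EisensteinSeries.E2 ⟨τ, hτ⟩ := by
  rw [Eis2, EisensteinSeries.E2_eq_tsum_cexp,
    tsum_pnat_eq_tsum_succ (f := fun n : ℕ => (ArithmeticFunction.sigma 1 n : ℂ) *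
      Complex.exp (2 * π * I * τ) ^ n)]
  congr 2
  refine tsum_congr fun n => ?_
  rw [← Complex.exp_nat_mul, ArithmeticFunction.sigma_apply, sigmaD]
  congr 2
  push_cast; ring

lemma etaD_ne_zero {τ : ℂ} (hτ : 0 < τ.im) : etaD τ ≠ 0 := by
  rw [etaD_eq_eta]
  exact ModularForm.eta_ne_zero hτ

lemma hasDerivAt_etaD {τ : ℂ} (hτ : 0 < τ.im) :
    HasDerivAt etaD (π * I / 12 * Eis2 τ * etaD τ) τ := by
  have h := ModularForm.logDeriv_eta_eq_E2 ⟨τ, hτ⟩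
  rw [← Eis2_eq_E2, ← etaD_eq_eta, logDeriv_apply] at h
  have hd : DifferentiableAt ℂ etaD τ := by
    rw [etaD_eq_eta]
    exact ModularForm.differentiableAt_eta_of_mem_upperHalfPlaneSet hτ
  refine hd.hasDerivAt.congr_deriv ?_
  rw [← h]
  exact (div_mul_cancel₀ _ (etaD_ne_zero hτ)).symm

/-- `H^{(1)}_{−2}(φ_{−2,1}) = −(1/2)·φ_{0,1}` on `ℍ × ℂ`. -/
theorem statement3 (τ z : ℂ) (hτ : 0 < τ.im) :
    heatMod 1 (-2) phim21 τ z = -(1/2) * phi01 τ z := by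
  have hη := etaD_ne_zero hτ
  have hθ := differentiable_thetaJ hτ
  have hθ' : Differentiable ℂ (deriv (thetaJ τ)) := by
    simpa [differentiableOn_univ] using (hθ.differentiableOn (s := Set.univ)).deriv isOpen_univ
  have hτd : deriv (fun t => phim21 t z) τ =
      2 * thetaJ τ z * deriv (fun t => thetaJ t z) τ / etaD τ ^ 6
        - 6 * (π * I / 12 * Eis2 τ) * thetaJ τ z ^ 2 / etaD τ ^ 6 := by
    have h := ((differentiableAt_thetaJ_tau z hτ).hasDerivAt.fun_pow 2).fun_div
      ((hasDerivAt_etaD hτ).fun_pow 6) (pow_ne_zero 6 hη)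
    simp only [phim21]
    rw [h.deriv]
    field_simp
    push_cast
    ring
  have hz1 : deriv (phim21 τ) =
      fun w => 2 * (thetaJ τ w * deriv (thetaJ τ) w) / etaD τ ^ 6 := by
    funext w
    refine ((((hθ w).hasDerivAt.fun_pow 2).div_const (etaD τ ^ 6)).congr_deriv ?_).deriv
    push_cast
    ring
  have hz2 : deriv (deriv (phim21 τ)) z =
      2 * (deriv (thetaJ τ) z ^ 2 + thetaJ τ z * deriv (deriv (thetaJ τ)) z) / etaD τ ^ 6 := by
    rw [hz1]
    refine (((((hθ z).hasDerivAt.fun_mul (hθ' z).hasDerivAt).const_mul 2).div_const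
      (etaD τ ^ 6)).congr_deriv ?_).deriv
    ring
  have hπ : (π : ℂ) ≠ 0 := ofReal_ne_zero.2 Real.pi_ne_zero
  rw [heatMod, heatOp, hτd, hz2, phi01, phim21, thetaJ_heat z hτ]
  push_cast
  field_simp
  ring_nf
  simp only [I_sq]
  ring
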